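/- arXiv:1709.01748 — 2 statements merged into one kernel-verified Lean document; each statement's English description precedes it below -/
import Mathlib

section
/- Let K = ℚ(√d) ⊂ ℂ with d = −1 or d = −2, and let w_K = |O_K^×| (so w_K = 4 for d = −1 and w_K = 2 for d = −2). Then every unit u of the ring O_K[1/2] satisfies u^{w_K} = ū^{w_K}, where ū denotes the complex conjugate of u; equivalently, the group homomorphism (O_K[1/2])^× → ℂ^×, u ↦ (u/ū)^{w_K}, is trivial. -/
noncomputable section

/-!
Since `2` ramifies in `K`, the fractional ideal generated by a unit `u` of `O_K[1/2]` is a power of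
the only prime above `2`, so it is stable under conjugation and `u / conj u` is a unit of `O_K`,
hence killed by `w_K`. In `ℤ√d` with `d ≡ 2, 3 (mod 4)`, ramification takes the concrete form
`4 ∣ N(z) → 2 ∣ z`. If `N(x) = ± 2 ^ k`, applying this repeatedly to `z = x ^ 2` shows that
`2 ^ k` divides `x ^ 2`, so `x * star x` divides `x ^ 2` and `star x` divides `x`.
-/

namespace RamifiedAtTwo

open Zsqrtd

variable {d : ℤ}

lemma ne_mul_self_of_emod_four (hd : d % 4 = 2 ∨ d % 4 = 3) (n : ℤ) : d ≠ n * n := by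
  rintro rfl
  rcases n.even_or_odd' with ⟨m, rfl | rfl⟩ <;> ring_nf at hd <;> omega

lemma isDomain_of_nonsquare (hd : ∀ n : ℤ, d ≠ n * n) : IsDomain (ℤ√d) := by
  have : NoZeroDivisors (ℤ√d) :=
    ⟨fun {x y} hxy ↦ by
      simpa only [norm_mul, mul_eq_zero, norm_eq_zero hd] using (norm_eq_zero hd _).2 hxy⟩
  exact NoZeroDivisors.to_isDomain _

lemma two_dvd_of_four_dvd_norm (hd : d % 4 = 2 ∨ d % 4 = 3) {z : ℤ√d} (hz : 4 ∣ z.norm) :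
    2 ∣ z := by
  refine (intCast_dvd 2 z).2 ?_
  obtain ⟨a, b⟩ := z
  rw [norm_def] at hz
  obtain ⟨e, rfl | rfl⟩ : ∃ e, d = 4 * e + 2 ∨ d = 4 * e + 3 := ⟨d / 4, by lia⟩ <;>
    rcases a.even_or_odd' with ⟨m, rfl | rfl⟩ <;>
    rcases b.even_or_odd' with ⟨n, rfl | rfl⟩ <;>
    ring_nf at hz ⊢ <;> omega

lemma norm_two : (2 : ℤ√d).norm = 4 := by
  simpa using norm_intCast (d := d) 2

lemma two_pow_dvd_of_four_pow_dvd_norm (hd : d % 4 = 2 ∨ d % 4 = 3) (k : ℕ) {z : ℤ√d}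
    (hz : 4 ^ k ∣ z.norm) : 2 ^ k ∣ z := by
  induction k generalizing z with
  | zero => simp
  | succ k ih =>
    obtain ⟨y, rfl⟩ := two_dvd_of_four_dvd_norm hd ((dvd_pow_self 4 k.succ_ne_zero).trans hz)
    rw [norm_mul, norm_two, pow_succ'] at hz
    rw [pow_succ']
    exact mul_dvd_mul_left 2 (ih ((mul_dvd_mul_iff_left four_ne_zero).1 hz))

lemma two_pow_dvd_sq_of_two_pow_dvd_norm (hd : d % 4 = 2 ∨ d % 4 = 3) {k : ℕ} {x : ℤ√d}
    (hx : 2 ^ k ∣ x.norm) : 2 ^ k ∣ x ^ 2 := by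
  refine two_pow_dvd_of_four_pow_dvd_norm hd k ?_
  rw [sq, norm_mul, show (4 : ℤ) = 2 * 2 by norm_num, mul_pow]
  exact mul_dvd_mul hx hx

lemma star_dvd_self_of_dvd_two_pow (hd : d % 4 = 2 ∨ d % 4 = 3) {n : ℕ} {x : ℤ√d}
    (hx : x ∣ 2 ^ n) : star x ∣ x := by
  have := isDomain_of_nonsquare (ne_mul_self_of_emod_four hd)
  have hx0 : x ≠ 0 := ne_zero_of_dvd_ne_zero (pow_ne_zero n two_ne_zero) hx
  have hnorm_dvd : x.norm ∣ 2 ^ (2 * n) := by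
    have h : x.norm ∣ (2 : ℤ√d).norm ^ n :=
      map_pow normMonoidHom (2 : ℤ√d) n ▸ map_dvd normMonoidHom hx
    rwa [norm_two, show (4 : ℤ) = 2 ^ 2 by norm_num, ← pow_mul] at h
  obtain ⟨k, -, hk⟩ := (dvd_prime_pow Int.prime_two _).1 hnorm_dvd
  have hmul_star_dvd : x * star x ∣ x * x := by
    rw [← norm_eq_mul_conj, ← sq]
    calc (x.norm : ℤ√d) ∣ ((2 ^ k : ℤ) : ℤ√d) := (intCast_dvd_intCast _ _).2 hk.dvd
      _ = 2 ^ k := by push_cast; rfl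
      _ ∣ x ^ 2 := two_pow_dvd_sq_of_two_pow_dvd_norm hd hk.symm.dvd
  exact (mul_dvd_mul_iff_left hx0).1 hmul_star_dvd

lemma associated_star_of_dvd_two_pow (hd : d % 4 = 2 ∨ d % 4 = 3) {n : ℕ} {x : ℤ√d}
    (hx : x ∣ 2 ^ n) : Associated x (star x) := by
  have := isDomain_of_nonsquare (ne_mul_self_of_emod_four hd)
  have hstar : star x ∣ x := star_dvd_self_of_dvd_two_pow hd hx
  have hself : x ∣ star x := by
    simpa only [starRingEnd_apply, star_star] using map_dvd (starRingEnd (ℤ√d)) hstar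
  exact associated_of_dvd_dvd hself hstar

lemma unit_mul_star (hd : d ≤ 0) (ε : (ℤ√d)ˣ) : (ε : ℤ√d) * star (ε : ℤ√d) = 1 := by
  rw [← norm_eq_mul_conj, (norm_eq_one_iff' hd _).2 ε.isUnit, Int.cast_one]

lemma unit_sq_eq_one (hd : d < -1) (ε : (ℤ√d)ˣ) : ε ^ 2 = 1 := by
  have hnorm := (norm_eq_one_iff' (by lia) _).2 ε.isUnit
  rw [norm_def] at hnorm
  have him : (ε : ℤ√d).im = 0 := by
    by_contra him
    nlinarith [mul_self_pos.2 him, mul_self_nonneg (ε : ℤ√d).re]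
  have hstar : star (ε : ℤ√d) = ε := by ext <;> simp [him]
  have hmul := unit_mul_star (by lia) ε
  rwa [hstar, ← sq, ← Units.val_pow_eq_pow_val, Units.val_eq_one] at hmul

lemma unit_pow_four_eq_one (hd : d < 0) (ε : (ℤ√d)ˣ) : ε ^ 4 = 1 := by
  have hnorm := (norm_eq_one_iff' hd.le _).2 ε.isUnit
  rw [norm_def] at hnorm
  have hre_im : (ε : ℤ√d).re = 0 ∨ (ε : ℤ√d).im = 0 := by
    by_contra! h
    nlinarith [mul_self_pos.2 h.1, mul_self_pos.2 h.2]
  have hstar : star (ε : ℤ√d) ^ 2 = (ε : ℤ√d) ^ 2 := by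
    rcases hre_im with hre | him
    · rw [show star (ε : ℤ√d) = -ε by ext <;> simp [hre], neg_sq]
    · rw [show star (ε : ℤ√d) = ε by ext <;> simp [him]]
  rw [← Units.val_eq_one, Units.val_pow_eq_pow_val]
  calc (ε : ℤ√d) ^ 4 = (ε * star (ε : ℤ√d)) ^ 2 := by rw [mul_pow, hstar, ← pow_add]
    _ = 1 := by rw [unit_mul_star hd.le, one_pow]

lemma unit_pow_eq_one (hd : d < 0) (ε : (ℤ√d)ˣ) : ε ^ (if d = -1 then 4 else 2) = 1 := by
  split_ifs with h
  · exact unit_pow_four_eq_one hd ε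
  · exact unit_sq_eq_one (by lia) ε

lemma pow_eq_star_pow_of_dvd_two_pow (hd₀ : d < 0) (hd : d % 4 = 2 ∨ d % 4 = 3) {n : ℕ}
    {x : ℤ√d} (hx : x ∣ 2 ^ n) :
    x ^ (if d = -1 then 4 else 2) = star x ^ (if d = -1 then 4 else 2) := by
  obtain ⟨ε, hε⟩ := associated_star_of_dvd_two_pow hd hx
  rw [← hε, mul_pow, ← Units.val_pow_eq_pow_val, unit_pow_eq_one hd₀, Units.val_one, mul_one]

lemma I_mul_sqrt_mul_self (hd : d ≤ 0) :
    Complex.I * (√((-d : ℤ) : ℝ) : ℂ) * (Complex.I * (√((-d : ℤ) : ℝ) : ℂ)) = d := by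
  have hsqrt := Real.mul_self_sqrt (show (0 : ℝ) ≤ ((-d : ℤ) : ℝ) by exact_mod_cast neg_nonneg.2 hd)
  rw [mul_mul_mul_comm, Complex.I_mul_I, ← Complex.ofReal_mul, hsqrt]
  push_cast
  ring

lemma lift_star {L : Type*} [CommRing L] [StarRing L] {ω : { r : L // r * r = d }}
    (hω : star (ω : L) = -ω) (x : ℤ√d) : lift ω (star x) = star (lift ω x) := by
  simp [hω]

lemma exists_pow_mul_mem_of_mem_closure {A : Type*} [CommRing A] (S : Subring A) {s : A}
    (hs : s ∈ S) {T : Set A} (hT : ∀ t ∈ T, s * t ∈ S) {u : A} (hu : u ∈ Subring.closure T) :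
    ∃ n : ℕ, s ^ n * u ∈ S :=
  have ⟨n, hn⟩ := Algebra.pow_smul_mem_of_smul_subset_of_mem_adjoin s T (subalgebraOfSubring S)
    (Set.smul_set_subset_iff.2 fun _ ↦ hT _) (by rwa [Algebra.adjoin_int]) hs
  ⟨n, hn n le_rfl⟩

end RamifiedAtTwo

open RamifiedAtTwo in
theorem units_pow_wK_eq_conj_pow_wK_general (d : ℤ) (hd₀ : d < 0) (hd : d % 4 = 2 ∨ d % 4 = 3)
    (ω : ℂ) (hω : ω = Complex.I * (Real.sqrt ((-d : ℤ) : ℝ) : ℂ))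
    (R : Subring ℂ) (hR : R = Subring.closure {ω, (2 : ℂ)⁻¹})
    (w : ℕ) (hw : w = if d = -1 then 4 else 2) :
    ∀ u : ℂ, u ∈ R → (∃ v ∈ R, u * v = 1) →
      u ^ w = (starRingEnd ℂ) u ^ w := by
  rintro u hu ⟨v, hv, huv⟩
  subst hR
  let f : ℤ√d →+* ℂ := Zsqrtd.lift ⟨ω, hω ▸ I_mul_sqrt_mul_self hd₀.le⟩
  have hf_inj : Function.Injective f := Zsqrtd.lift_injective _ (ne_mul_self_of_emod_four hd)
  have hf_star (x : ℤ√d) : f (star x) = starRingEnd ℂ (f x) := lift_star (by simp [hω]) x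
  have hf_two : f 2 = 2 := map_ofNat f 2
  have hgen : ∀ t ∈ ({ω, 2⁻¹} : Set ℂ), 2 * t ∈ f.range := by
    rintro t (rfl | rfl)
    · exact ⟨2 * Zsqrtd.sqrtd, by simp [f]⟩
    · exact ⟨1, by simp⟩
  have hclear {t : ℂ} (ht : t ∈ Subring.closure {ω, 2⁻¹}) : ∃ n, 2 ^ n * t ∈ f.range :=
    exists_pow_mul_mem_of_mem_closure f.range ⟨2, hf_two⟩ hgen ht
  obtain ⟨m, x, hx⟩ := hclear hu
  obtain ⟨n, y, hy⟩ := hclear hv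
  have hxy : x * y = 2 ^ (m + n) := hf_inj <| by
    rw [map_mul, hx, hy, mul_mul_mul_comm, huv, mul_one, map_pow, hf_two, pow_add]
  have hpow := congrArg f (pow_eq_star_pow_of_dvd_two_pow hd₀ hd (Dvd.intro y hxy))
  rw [← hw, map_pow, map_pow, hf_star, hx, map_mul, map_pow, map_ofNat, mul_pow, mul_pow] at hpow
  exact mul_left_cancel₀ (by simp) hpow

/-- Let `K = ℚ(√d) ⊂ ℂ` with `d = -1` or `d = -2`, and let `w_K = |O_K^×|` (so `w_K = 4` for
`d = -1` and `w_K = 2` for `d = -2`). Then every unit `u` of the ring `O_K[1/2]` satisfies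
`u^{w_K} = conj(u)^{w_K}`. Here `O_K = ℤ[√d]`, so `O_K[1/2]` is the subring of `ℂ` generated
by `√d` and `1/2`. -/
theorem units_pow_wK_eq_conj_pow_wK (d : ℤ) (hd : d = -1 ∨ d = -2)
    (ω : ℂ) (hω : ω = Complex.I * (Real.sqrt ((-d : ℤ) : ℝ) : ℂ))
    (R : Subring ℂ) (hR : R = Subring.closure {ω, (2 : ℂ)⁻¹})
    (w : ℕ) (hw : w = if d = -1 then 4 else 2) :
    ∀ u : ℂ, u ∈ R → (∃ v ∈ R, u * v = 1) →
      u ^ w = (starRingEnd ℂ) u ^ w := by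
  have hd' : d < 0 ∧ (d % 4 = 2 ∨ d % 4 = 3) := by lia
  exact units_pow_wK_eq_conj_pow_wK_general d hd'.1 hd'.2 ω hω R hR w hw
end
end

section
/- Let F be a Siegel cusp form of degree 2 and weight (j,k) on Γ₂ = Sp(4,ℤ), written in coordinates F = (F_0,…,F_j)ᵗ with respect to the basis x₁^{j−l}x₂^{l} of Sym^j(ℂ²), and for 0 ≤ l ≤ j define g_l(z₁,z₂) = F_l(diag(z₁,z₂)) for z₁, z₂ in the upper half plane ℍ₁. Then: (i) for each fixed z₂ ∈ ℍ₁, the function z₁ ↦ g_l(z₁,z₂) is a cusp form of weight j+k−l on SL(2,ℤ); (ii) for each fixed z₁ ∈ ℍ₁, the function z₂ ↦ g_l(z₁,z₂) is a cusp form of weight k+l on SL(2,ℤ); (iii) g_l(z₂,z₁) = (−1)^k g_{j−l}(z₁,z₂) for all z₁, z₂ ∈ ℍ₁. -/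
noncomputable section

open Matrix Complex Filter Topology

/-- The standard symplectic form matrix of size 4. -/
def J4 : Matrix (Fin 4) (Fin 4) ℤ := !![0,0,1,0; 0,0,0,1; -1,0,0,0; 0,-1,0,0]

/-- The Siegel modular group `Γ₂ = Sp(4,ℤ)`, as a set of 4×4 integer matrices. -/
def Sp4Z : Set (Matrix (Fin 4) (Fin 4) ℤ) := {γ | γᵀ * J4 * γ = J4}

/-- The principal congruence subgroup `Γ₂[2]` of level 2. -/
def Sp4Z2 : Set (Matrix (Fin 4) (Fin 4) ℤ) :=
  {γ | γ ∈ Sp4Z ∧ ∀ i j, ((γ i j : ZMod 2) = if i = j then 1 else 0)}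

/-- The Siegel upper half space of degree 2: symmetric 2×2 complex matrices with
positive definite imaginary part (encoded as functions `Fin 2 → Fin 2 → ℂ`). -/
def H2 : Set (Fin 2 → Fin 2 → ℂ) :=
  {τ | (Matrix.of τ).IsSymm ∧ (Matrix.of fun i j => (τ i j).im).PosDef}

/-- The four 2×2 blocks of a 4×4 integer matrix, as complex matrices. -/
def blk (γ : Matrix (Fin 4) (Fin 4) ℤ) (r s : Fin 2) : Matrix (Fin 2) (Fin 2) ℂ :=
  Matrix.of fun i j =>
    ((γ ⟨2 * (r : ℕ) + (i : ℕ), by have h1 := r.isLt; have h2 := i.isLt; omega⟩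
        ⟨2 * (s : ℕ) + (j : ℕ), by have h1 := s.isLt; have h2 := j.isLt; omega⟩ : ℤ) : ℂ)

/-- The factor `cτ + d`. -/
def den (γ : Matrix (Fin 4) (Fin 4) ℤ) (τ : Fin 2 → Fin 2 → ℂ) : Matrix (Fin 2) (Fin 2) ℂ :=
  blk γ 1 0 * Matrix.of τ + blk γ 1 1

/-- The action `γ·τ = (aτ+b)(cτ+d)⁻¹` of `Sp(4)` on the Siegel upper half space. -/
def moeb (γ : Matrix (Fin 4) (Fin 4) ℤ) (τ : Fin 2 → Fin 2 → ℂ) : Fin 2 → Fin 2 → ℂ :=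
  fun i j => ((blk γ 0 0 * Matrix.of τ + blk γ 0 1) * (den γ τ)⁻¹) i j

/-- Matrix coefficients of the `j`-th symmetric power of the standard representation of
`GL(2,ℂ)`, in the basis `x₁^(j-i) x₂^i`. -/
def symCoeff (j : ℕ) (m : Matrix (Fin 2) (Fin 2) ℂ) (l i : Fin (j + 1)) : ℂ :=
  (((Polynomial.C (m 0 0) + Polynomial.C (m 1 0) * Polynomial.X) ^ (j - (l : ℕ)) *
    (Polynomial.C (m 0 1) + Polynomial.C (m 1 1) * Polynomial.X) ^ (l : ℕ)).coeff i)

/-- The `j`-th symmetric power `Sym^j(m)` acting on coordinate vectors. -/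
def symAct (j : ℕ) (m : Matrix (Fin 2) (Fin 2) ℂ) (v : Fin (j + 1) → ℂ) : Fin (j + 1) → ℂ :=
  fun i => ∑ l, symCoeff j m l i * v l

lemma symAct_add (j : ℕ) (m : Matrix (Fin 2) (Fin 2) ℂ) (v w : Fin (j + 1) → ℂ) :
    symAct j m (v + w) = symAct j m v + symAct j m w := by
  funext i
  simp [symAct, mul_add, Finset.sum_add_distrib]

lemma symAct_smul (j : ℕ) (m : Matrix (Fin 2) (Fin 2) ℂ) (a : ℂ) (v : Fin (j + 1) → ℂ) :
    symAct j m (a • v) = a • symAct j m v := by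
  funext i
  simp only [symAct, Pi.smul_apply, smul_eq_mul, Finset.mul_sum]
  exact Finset.sum_congr rfl fun l _ => by ring

lemma symAct_zero (j : ℕ) (m : Matrix (Fin 2) (Fin 2) ℂ) : symAct j m 0 = 0 := by
  funext i; simp [symAct]

/-- The weight `(j,k)` automorphy action `Sym^j(m) ⊗ det(m)^k`. -/
def wt (j : ℕ) (k : ℤ) (m : Matrix (Fin 2) (Fin 2) ℂ) (v : Fin (j + 1) → ℂ) :
    Fin (j + 1) → ℂ :=
  (m.det ^ k) • symAct j m v

lemma wt_add (j : ℕ) (k : ℤ) (m : Matrix (Fin 2) (Fin 2) ℂ) (v w : Fin (j + 1) → ℂ) :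
    wt j k m (v + w) = wt j k m v + wt j k m w := by
  simp [wt, symAct_add, smul_add]

lemma wt_smul (j : ℕ) (k : ℤ) (m : Matrix (Fin 2) (Fin 2) ℂ) (a : ℂ) (v : Fin (j + 1) → ℂ) :
    wt j k m (a • v) = a • wt j k m v := by
  rw [wt, wt, symAct_smul, smul_comm]

lemma wt_zero (j : ℕ) (k : ℤ) (m : Matrix (Fin 2) (Fin 2) ℂ) : wt j k m 0 = 0 := by
  simp [wt, symAct_zero]

/-- The slash operation `(F|γ)(τ) = Sym^j(cτ+d)⁻¹ det(cτ+d)⁻ᵏ F(γ·τ)`. -/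
def slashS (j : ℕ) (k : ℤ) (γ : Matrix (Fin 4) (Fin 4) ℤ)
    (F : (Fin 2 → Fin 2 → ℂ) → (Fin (j + 1) → ℂ)) (τ : Fin 2 → Fin 2 → ℂ) :
    Fin (j + 1) → ℂ :=
  ((den γ τ).det ^ (-k)) • symAct j ((den γ τ)⁻¹) (F (moeb γ τ))

lemma slashS_add (j : ℕ) (k : ℤ) (γ : Matrix (Fin 4) (Fin 4) ℤ)
    (F G : (Fin 2 → Fin 2 → ℂ) → (Fin (j + 1) → ℂ)) (τ : Fin 2 → Fin 2 → ℂ) :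
    slashS j k γ (F + G) τ = slashS j k γ F τ + slashS j k γ G τ := by
  simp [slashS, symAct_add, smul_add]

lemma slashS_smul (j : ℕ) (k : ℤ) (γ : Matrix (Fin 4) (Fin 4) ℤ) (a : ℂ)
    (F : (Fin 2 → Fin 2 → ℂ) → (Fin (j + 1) → ℂ)) (τ : Fin 2 → Fin 2 → ℂ) :
    slashS j k γ (a • F) τ = a • slashS j k γ F τ := by
  simp only [slashS, Pi.smul_apply, symAct_smul]
  rw [smul_comm]

lemma slashS_zero (j : ℕ) (k : ℤ) (γ : Matrix (Fin 4) (Fin 4) ℤ) (τ : Fin 2 → Fin 2 → ℂ) :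
    slashS j k γ (0 : (Fin 2 → Fin 2 → ℂ) → (Fin (j + 1) → ℂ)) τ = 0 := by
  simp [slashS, symAct_zero]

/-- The diagonal point `diag(τ₁,τ₂)` of the Siegel upper half space. -/
def diagH (τ₁ τ₂ : ℂ) : Fin 2 → Fin 2 → ℂ :=
  fun i j => if i = j then (if i = 0 then τ₁ else τ₂) else 0

/-- `F` is a Siegel cusp form of degree 2 and weight `(j,k)` on `Γ`, with character `χ`:
holomorphic on `ℍ₂`, transforming by `F(γ·τ) = χ(γ) Sym^j(cτ+d) det(cτ+d)^k F(τ)` for `γ ∈ Γ`,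
with `(F|γ)(diag(τ₁,it)) → 0` as `t → ∞` for every `γ ∈ Γ₂`, and (normalization) vanishing
off `ℍ₂`. -/
def IsSiegelCuspForm (j : ℕ) (k : ℤ) (Γ : Set (Matrix (Fin 4) (Fin 4) ℤ))
    (χ : Matrix (Fin 4) (Fin 4) ℤ → ℂ)
    (F : (Fin 2 → Fin 2 → ℂ) → (Fin (j + 1) → ℂ)) : Prop :=
  DifferentiableOn ℂ F H2 ∧
  (∀ γ ∈ Γ, ∀ τ ∈ H2, F (moeb γ τ) = χ γ • wt j k (den γ τ) (F τ)) ∧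
  (∀ γ ∈ Sp4Z, ∀ τ₁ : ℂ, 0 < τ₁.im →
    Tendsto (fun t : ℝ => slashS j k γ F (diagH τ₁ (t * Complex.I))) atTop (𝓝 0)) ∧
  (∀ τ, τ ∉ H2 → F τ = 0)

/-- The space `S_{j,k}(Γ, χ)` of Siegel cusp forms of degree 2 and weight `(j,k)` on `Γ`
with character `χ`, as a complex vector space. -/
def SiegelCusp (j : ℕ) (k : ℤ) (Γ : Set (Matrix (Fin 4) (Fin 4) ℤ))
    (χ : Matrix (Fin 4) (Fin 4) ℤ → ℂ) :
    Submodule ℂ ((Fin 2 → Fin 2 → ℂ) → (Fin (j + 1) → ℂ)) where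
  carrier := {F | IsSiegelCuspForm j k Γ χ F}
  add_mem' := by
    rintro F G hF hG
    refine ⟨hF.1.add hG.1, ?_, ?_, ?_⟩
    · intro γ hγ τ hτ
      show F (moeb γ τ) + G (moeb γ τ) = χ γ • wt j k (den γ τ) (F τ + G τ)
      rw [wt_add, smul_add, hF.2.1 γ hγ τ hτ, hG.2.1 γ hγ τ hτ]
    · intro γ hγ τ₁ hτ
      have h := (hF.2.2.1 γ hγ τ₁ hτ).add (hG.2.2.1 γ hγ τ₁ hτ)
      rw [add_zero] at h
      exact h.congr fun t => (slashS_add j k γ F G _).symm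
    · intro τ hτ
      show F τ + G τ = 0
      rw [hF.2.2.2 τ hτ, hG.2.2.2 τ hτ, add_zero]
  zero_mem' := by
    refine ⟨?_, ?_, ?_, ?_⟩
    · exact differentiableOn_const 0
    · intro γ hγ τ hτ
      show (0 : Fin (j + 1) → ℂ) = χ γ • wt j k (den γ τ) 0
      rw [wt_zero, smul_zero]
    · intro γ hγ τ₁ hτ
      have : (fun t : ℝ => slashS j k γ (0 : (Fin 2 → Fin 2 → ℂ) → (Fin (j + 1) → ℂ))
          (diagH τ₁ (t * Complex.I))) = fun _ => 0 := by
        funext t; exact slashS_zero j k γ _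
      rw [this]
      exact tendsto_const_nhds
    · intro τ _; rfl
  smul_mem' := by
    rintro a F hF
    refine ⟨hF.1.const_smul a, ?_, ?_, ?_⟩
    · intro γ hγ τ hτ
      show a • F (moeb γ τ) = χ γ • wt j k (den γ τ) (a • F τ)
      rw [hF.2.1 γ hγ τ hτ, wt_smul, smul_comm]
    · intro γ hγ τ₁ hτ
      have h := (hF.2.2.1 γ hγ τ₁ hτ).const_smul a
      rw [smul_zero] at h
      exact h.congr fun t => (slashS_smul j k γ a F _).symm
    · intro τ hτ
      show a • F τ = 0
      rw [hF.2.2.2 τ hτ, smul_zero]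

/-- `ε` is (on `Γ₂`) the unique nontrivial homomorphism `Γ₂ → {±1}`. -/
def IsEps (ε : Matrix (Fin 4) (Fin 4) ℤ → ℂ) : Prop :=
  (∀ γ ∈ Sp4Z, ε γ = 1 ∨ ε γ = -1) ∧
  (∀ γ ∈ Sp4Z, ∀ δ ∈ Sp4Z, ε (γ * δ) = ε γ * ε δ) ∧
  (∃ γ ∈ Sp4Z, ε γ ≠ 1)

/-- `h` is a cusp form of weight `k` on `SL(2,ℤ)`: a holomorphic function on the upper half
plane with `h((az+b)/(cz+d)) = (cz+d)^k h(z)` for all of `SL(2,ℤ)` and `h(it) → 0` as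
`t → +∞`. -/
def IsCuspFormSL2 (k : ℤ) (h : ℂ → ℂ) : Prop :=
  DifferentiableOn ℂ h {z : ℂ | 0 < z.im} ∧
  (∀ a b c d : ℤ, a * d - b * c = 1 → ∀ z : ℂ, 0 < z.im →
    h (((a : ℂ) * z + (b : ℂ)) / ((c : ℂ) * z + (d : ℂ))) = ((c : ℂ) * z + (d : ℂ)) ^ k * h z) ∧
  Filter.Tendsto (fun t : ℝ => h (t * Complex.I)) Filter.atTop (nhds 0)

/-!
`SL(2,ℤ) × SL(2,ℤ)` embeds into `Sp(4,ℤ)`, preserving the diagonal, where `cτ + d` becomes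
`diag(c₁z₁ + d₁, c₂z₂ + d₂)`. Its symmetric power is diagonal in the monomial basis, so the
automorphy factor of `F` acts on the `l`-th component by the scalar
`(c₁z₁ + d₁)^(j+k-l) * (c₂z₂ + d₂)^(k+l)`. The exchange of coordinates also lies in `Sp(4,ℤ)`; its
factor `cτ + d` is the constant matrix `(0 1; 1 0)` of determinant `-1`, whose symmetric power
reverses the monomial basis. Decay in `z₂` is the cusp condition for the identity, decay in `z₁`
the cusp condition for the exchange.
-/

section

open scoped MatrixGroups UpperHalfPlane

open UpperHalfPlane (denom denom_ne_zero)

/-- The embedding `SL(2,ℤ) × SL(2,ℤ) → Sp(4,ℤ)` extending `ℍ₁ × ℍ₁ → ℍ₂`: the `(r, s)` block of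
the image of `(g, h)` is `diag(g r s, h r s)`. -/
def sl2Prod (g h : SL(2, ℤ)) : Matrix (Fin 4) (Fin 4) ℤ :=
  !![g 0 0, 0, g 0 1, 0; 0, h 0 0, 0, h 0 1; g 1 0, 0, g 1 1, 0; 0, h 1 0, 0, h 1 1]

/-- The element `diag(u, u)` of `Sp(4,ℤ)`, with `u = (0 1; 1 0)`, exchanging the two coordinates
of `ℂ²`. -/
def coordSwap : Matrix (Fin 4) (Fin 4) ℤ :=
  !![0, 1, 0, 0; 1, 0, 0, 0; 0, 0, 0, 1; 0, 0, 1, 0]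

lemma sl2Prod_mem_Sp4Z (g h : SL(2, ℤ)) : sl2Prod g h ∈ Sp4Z := by
  have hg := g.det_coe
  have hh := h.det_coe
  rw [Matrix.det_fin_two] at hg hh
  change _ = _
  ext i j
  fin_cases i <;> fin_cases j <;>
    simp [sl2Prod, J4, Matrix.mul_apply, Fin.sum_univ_four] <;> linarith

lemma coordSwap_mem_Sp4Z : coordSwap ∈ Sp4Z := by
  change _ = _
  unfold coordSwap J4
  decide

lemma one_mem_Sp4Z : 1 ∈ Sp4Z := by
  simp [Sp4Z]

lemma of_diagH (z w : ℂ) : Matrix.of (diagH z w) = diagonal ![z, w] := by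
  ext i j
  fin_cases i <;> fin_cases j <;> simp [diagH]

lemma diagH_rev (z w : ℂ) : (fun i j : Fin 2 => diagH z w i.rev j.rev) = diagH w z := by
  funext i j
  fin_cases i <;> fin_cases j <;> simp [diagH]

lemma diagH_mem_H2 {z w : ℂ} (hz : 0 < z.im) (hw : 0 < w.im) : diagH z w ∈ H2 := by
  have him : (Matrix.of fun i j => (diagH z w i j).im) = diagonal ![z.im, w.im] := by
    ext i j
    fin_cases i <;> fin_cases j <;> simp [diagH]
  refine ⟨of_diagH z w ▸ isSymm_diagonal _, ?_⟩
  rw [him, posDef_diagonal_iff]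
  simp [Fin.forall_fin_two, hz, hw]

lemma differentiable_diagH : Differentiable ℂ fun p : ℂ × ℂ => diagH p.1 p.2 := by
  refine differentiable_pi.2 fun i => differentiable_pi.2 fun j => ?_
  fin_cases i <;> fin_cases j <;> simp [diagH]

lemma blk_one (r s : Fin 2) : blk 1 r s = if r = s then 1 else 0 := by
  ext i j
  fin_cases r <;> fin_cases s <;> fin_cases i <;> fin_cases j <;> simp [blk]

lemma blk_sl2Prod (g h : SL(2, ℤ)) (r s : Fin 2) :
    blk (sl2Prod g h) r s = diagonal ![(g r s : ℂ), (h r s : ℂ)] := by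
  ext i j
  fin_cases r <;> fin_cases s <;> fin_cases i <;> fin_cases j <;> simp [blk, sl2Prod]

lemma blk_coordSwap (r s : Fin 2) :
    blk coordSwap r s = if r = s then !![0, 1; 1, 0] else 0 := by
  ext i j
  fin_cases r <;> fin_cases s <;> fin_cases i <;> fin_cases j <;> simp [blk, coordSwap]

lemma den_one (τ : Fin 2 → Fin 2 → ℂ) : den 1 τ = 1 := by
  simp [den, blk_one]

lemma den_sl2Prod (g h : SL(2, ℤ)) (z w : ℂ) :
    den (sl2Prod g h) (diagH z w) = diagonal ![denom g z, denom h w] := by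
  rw [den, blk_sl2Prod, blk_sl2Prod, of_diagH, diagonal_mul_diagonal, diagonal_add]
  congr 1
  ext i
  fin_cases i <;> simp [denom]

lemma den_coordSwap (τ : Fin 2 → Fin 2 → ℂ) : den coordSwap τ = !![0, 1; 1, 0] := by
  simp [den, blk_coordSwap]

lemma inv_antidiagonal_one : (!![0, 1; 1, 0] : Matrix (Fin 2) (Fin 2) ℂ)⁻¹ = !![0, 1; 1, 0] :=
  inv_eq_left_inv (by simp [one_fin_two])

lemma moeb_one (τ : Fin 2 → Fin 2 → ℂ) : moeb 1 τ = τ := by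
  funext i j
  simp [moeb, den_one, blk_one]

lemma moeb_sl2Prod (g h : SL(2, ℤ)) (z w : ℍ) :
    moeb (sl2Prod g h) (diagH z w) = diagH ↑(g • z) ↑(h • w) := by
  have hinv : (diagonal ![denom g z, denom h w])⁻¹ =
      diagonal ![(denom g z)⁻¹, (denom h w)⁻¹] := by
    refine inv_eq_left_inv ?_
    rw [diagonal_mul_diagonal, diagonal_eq_one]
    ext i
    fin_cases i <;> simp [denom_ne_zero]
  apply Matrix.of.injective
  change (_ * _ : Matrix (Fin 2) (Fin 2) ℂ) = _
  rw [den_sl2Prod, hinv, blk_sl2Prod, blk_sl2Prod, of_diagH, of_diagH, diagonal_mul_diagonal,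
    diagonal_add, diagonal_mul_diagonal, UpperHalfPlane.coe_specialLinearGroup_apply,
    UpperHalfPlane.coe_specialLinearGroup_apply]
  congr 1
  ext i
  fin_cases i <;> simp [denom, div_eq_mul_inv]

lemma moeb_coordSwap (τ : Fin 2 → Fin 2 → ℂ) :
    moeb coordSwap τ = fun i j => τ i.rev j.rev := by
  funext i j
  fin_cases i <;> fin_cases j <;>
    simp [moeb, den_coordSwap, inv_antidiagonal_one, blk_coordSwap, Matrix.mul_apply, vecHead,
      vecTail]

lemma symAct_diagonal (j : ℕ) (d : Fin 2 → ℂ) (v : Fin (j + 1) → ℂ) (l : Fin (j + 1)) :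
    symAct j (diagonal d) v l = d 0 ^ (j - (l : ℕ)) * d 1 ^ (l : ℕ) * v l := by
  have hcoeff (i : Fin (j + 1)) : symCoeff j (diagonal d) i l =
      if l = i then d 0 ^ (j - (i : ℕ)) * d 1 ^ (i : ℕ) else 0 := by
    simp [symCoeff, mul_pow, ← Polynomial.C_pow, -map_pow, Polynomial.coeff_X_pow, Fin.ext_iff]
  simp [symAct, hcoeff]

lemma symAct_one (j : ℕ) (v : Fin (j + 1) → ℂ) : symAct j 1 v = v := by
  funext l
  rw [← diagonal_one, symAct_diagonal]
  simp

lemma symAct_antidiagonal_one (j : ℕ) (v : Fin (j + 1) → ℂ) (l : Fin (j + 1)) :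
    symAct j !![0, 1; 1, 0] v l = v l.rev := by
  have hcoeff (i : Fin (j + 1)) :
      symCoeff j !![0, 1; 1, 0] i l = if i = l.rev then 1 else 0 := by
    have hiff : (l : ℕ) = j - i ↔ i = l.rev := by
      rw [Fin.ext_iff, Fin.val_rev]
      omega
    simp [symCoeff, Polynomial.coeff_X_pow, hiff]
  simp [symAct, hcoeff]

lemma slashS_one {j : ℕ} (k : ℤ) (F : (Fin 2 → Fin 2 → ℂ) → (Fin (j + 1) → ℂ)) :
    slashS j k 1 F = F := by
  funext τ
  simp [slashS, den_one, moeb_one, symAct_one]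

lemma slashS_coordSwap {j : ℕ} (k : ℤ) (F : (Fin 2 → Fin 2 → ℂ) → (Fin (j + 1) → ℂ))
    (τ : Fin 2 → Fin 2 → ℂ) (l : Fin (j + 1)) :
    slashS j k coordSwap F τ l = (-1) ^ k * F (fun i i' => τ i.rev i'.rev) l.rev := by
  have hsign : ((-1 : ℂ) ^ k)⁻¹ = (-1) ^ k := by rw [← _root_.inv_zpow, inv_neg_one]
  simp [slashS, den_coordSwap, moeb_coordSwap, inv_antidiagonal_one, symAct_antidiagonal_one,
    det_fin_two_of, hsign]

lemma IsCuspFormSL2.of_smul {k : ℤ} {f : ℂ → ℂ} (hdiff : DifferentiableOn ℂ f {z | 0 < z.im})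
    (hsmul : ∀ (g : SL(2, ℤ)) (z : ℍ), f ↑(g • z) = denom g z ^ k * f z)
    (htendsto : Tendsto (fun t : ℝ => f (t * I)) atTop (𝓝 0)) : IsCuspFormSL2 k f := by
  refine ⟨hdiff, fun a b c d hdet z hz => ?_, htendsto⟩
  obtain ⟨g, hg⟩ : ∃ g : SL(2, ℤ), (g : Matrix (Fin 2) (Fin 2) ℤ) = !![a, b; c, d] :=
    ⟨⟨!![a, b; c, d], by rw [det_fin_two_of, hdet]⟩, rfl⟩
  simpa [-ModularGroup.sl_moeb, UpperHalfPlane.coe_specialLinearGroup_apply, denom, hg]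
    using hsmul g ⟨z, hz⟩

namespace IsSiegelCuspForm

variable {j : ℕ} {k : ℤ} {Γ : Set (Matrix (Fin 4) (Fin 4) ℤ)} {χ : Matrix (Fin 4) (Fin 4) ℤ → ℂ}
  {F : (Fin 2 → Fin 2 → ℂ) → (Fin (j + 1) → ℂ)}

lemma differentiableOn_diagH (hF : IsSiegelCuspForm j k Γ χ F) (l : Fin (j + 1)) :
    DifferentiableOn ℂ (fun p : ℂ × ℂ => F (diagH p.1 p.2) l) {p | 0 < p.1.im ∧ 0 < p.2.im} :=
  (differentiableOn_pi.1 hF.1 l).comp differentiable_diagH.differentiableOn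
    fun _ hp => diagH_mem_H2 hp.1 hp.2

lemma apply_diagH_smul (hF : IsSiegelCuspForm j k Γ χ F) {g h : SL(2, ℤ)}
    (hΓ : sl2Prod g h ∈ Γ) (z w : ℍ) (l : Fin (j + 1)) :
    F (diagH ↑(g • z) ↑(h • w)) l = χ (sl2Prod g h) *
      (denom g z ^ ((j : ℤ) + k - (l : ℕ)) * denom h w ^ (k + (l : ℕ)) * F (diagH z w) l) := by
  have hF_smul := congrFun (hF.2.1 _ hΓ _ (diagH_mem_H2 z.im_pos w.im_pos)) l
  have hexp : (j : ℤ) + k - (l : ℕ) = k + (j - (l : ℕ) : ℕ) := by omega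
  rw [moeb_sl2Prod, den_sl2Prod] at hF_smul
  rw [hF_smul, hexp, zpow_add₀ (denom_ne_zero _ z), zpow_add₀ (denom_ne_zero _ w)]
  simp only [wt, det_diagonal, Fin.prod_univ_two, Pi.smul_apply, smul_eq_mul, symAct_diagonal,
    cons_val_zero, cons_val_one, mul_zpow, zpow_natCast]
  ring

lemma apply_diagH_swap (hF : IsSiegelCuspForm j k Γ χ F) (hΓ : coordSwap ∈ Γ) (z w : ℍ)
    (l : Fin (j + 1)) :
    F (diagH w z) l = χ coordSwap * ((-1) ^ k * F (diagH z w) l.rev) := by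
  have hF_swap := congrFun (hF.2.1 _ hΓ _ (diagH_mem_H2 z.im_pos w.im_pos)) l
  rw [moeb_coordSwap, diagH_rev, den_coordSwap] at hF_swap
  simpa [wt, symAct_antidiagonal_one, det_fin_two_of] using hF_swap

lemma tendsto_diagH_snd (hF : IsSiegelCuspForm j k Γ χ F) (z : ℍ) (l : Fin (j + 1)) :
    Tendsto (fun t : ℝ => F (diagH z (t * I)) l) atTop (𝓝 0) := by
  simpa only [slashS_one, Pi.zero_apply] using
    tendsto_pi_nhds.1 (hF.2.2.1 1 one_mem_Sp4Z z z.im_pos) l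

lemma tendsto_diagH_fst (hF : IsSiegelCuspForm j k Γ χ F) (w : ℍ) (l : Fin (j + 1)) :
    Tendsto (fun t : ℝ => F (diagH (t * I) w) l) atTop (𝓝 0) := by
  have hslash := tendsto_pi_nhds.1 (hF.2.2.1 coordSwap coordSwap_mem_Sp4Z w w.im_pos) l.rev
  simp only [slashS_coordSwap, diagH_rev, Fin.rev_rev] at hslash
  have hsign : ((-1 : ℂ) ^ k) * (-1) ^ k = 1 := by
    rw [← mul_zpow, neg_one_mul, neg_neg, _root_.one_zpow]
  simpa [← mul_assoc, hsign] using hslash.const_mul ((-1 : ℂ) ^ k)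

lemma isCuspFormSL2_fst (hF : IsSiegelCuspForm j k Γ χ F)
    (hΓ : ∀ g, sl2Prod g 1 ∈ Γ) (hχ : ∀ g, χ (sl2Prod g 1) = 1) (w : ℍ) (l : Fin (j + 1)) :
    IsCuspFormSL2 ((j : ℤ) + k - (l : ℕ)) fun z => F (diagH z w) l := by
  refine .of_smul ?_ (fun g z => ?_) (hF.tendsto_diagH_fst w l)
  · exact (hF.differentiableOn_diagH l).comp (f := fun z => (z, ↑w)) (by fun_prop)
      fun _ hz => ⟨hz, w.im_pos⟩
  · simpa only [one_smul, map_one, UpperHalfPlane.denom_one, _root_.one_zpow, one_mul,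
      mul_one, hχ] using hF.apply_diagH_smul (hΓ g) z w l

lemma isCuspFormSL2_snd (hF : IsSiegelCuspForm j k Γ χ F)
    (hΓ : ∀ h, sl2Prod 1 h ∈ Γ) (hχ : ∀ h, χ (sl2Prod 1 h) = 1) (z : ℍ) (l : Fin (j + 1)) :
    IsCuspFormSL2 (k + (l : ℕ)) fun w => F (diagH z w) l := by
  refine .of_smul ?_ (fun h w => ?_) (hF.tendsto_diagH_snd z l)
  · exact (hF.differentiableOn_diagH l).comp (f := fun w => (↑z, w)) (by fun_prop)
      fun _ hw => ⟨z.im_pos, hw⟩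
  · simpa only [one_smul, map_one, UpperHalfPlane.denom_one, _root_.one_zpow, one_mul,
      mul_one, hχ] using hF.apply_diagH_smul (hΓ h) z w l

end IsSiegelCuspForm

end

theorem restriction_to_diagonal_general {j : ℕ} {k : ℤ} {Γ : Set (Matrix (Fin 4) (Fin 4) ℤ)}
    {χ : Matrix (Fin 4) (Fin 4) ℤ → ℂ} {F : (Fin 2 → Fin 2 → ℂ) → (Fin (j + 1) → ℂ)}
    (hF : IsSiegelCuspForm j k Γ χ F) (hΓ : ∀ g h, sl2Prod g h ∈ Γ)
    (hχ : ∀ g h, χ (sl2Prod g h) = 1) (hswap : coordSwap ∈ Γ) (l : Fin (j + 1)) :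
    (∀ z₂ : ℂ, 0 < z₂.im →
      IsCuspFormSL2 ((j : ℤ) + k - (l : ℕ)) (fun z₁ => F (diagH z₁ z₂) l)) ∧
    (∀ z₁ : ℂ, 0 < z₁.im →
      IsCuspFormSL2 (k + (l : ℕ)) (fun z₂ => F (diagH z₁ z₂) l)) ∧
    (∀ z₁ z₂ : ℂ, 0 < z₁.im → 0 < z₂.im →
      F (diagH z₂ z₁) l = χ coordSwap * ((-1) ^ k * F (diagH z₁ z₂) l.rev)) :=
  ⟨fun z₂ hz₂ => hF.isCuspFormSL2_fst (hΓ · 1) (hχ · 1) ⟨z₂, hz₂⟩ l,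
    fun z₁ hz₁ => hF.isCuspFormSL2_snd (hΓ 1) (hχ 1) ⟨z₁, hz₁⟩ l,
    fun z₁ z₂ hz₁ hz₂ => hF.apply_diagH_swap hswap ⟨z₁, hz₁⟩ ⟨z₂, hz₂⟩ l⟩

/-- Restriction of a Siegel cusp form of weight `(j,k)` on `Γ₂` to the diagonal: writing
`F = (F_0,…,F_j)ᵗ` and `g_l(z₁,z₂) = F_l(diag(z₁,z₂))`, (i) `z₁ ↦ g_l(z₁,z₂)` is a cusp form
of weight `j+k-l` on `SL(2,ℤ)` for fixed `z₂ ∈ ℍ₁`; (ii) `z₂ ↦ g_l(z₁,z₂)` is a cusp form of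
weight `k+l` on `SL(2,ℤ)` for fixed `z₁ ∈ ℍ₁`; (iii) `g_l(z₂,z₁) = (−1)^k g_{j−l}(z₁,z₂)`. -/
theorem restriction_to_diagonal (j : ℕ) (k : ℤ)
    (F : (Fin 2 → Fin 2 → ℂ) → (Fin (j + 1) → ℂ))
    (hF : F ∈ SiegelCusp j k Sp4Z (fun _ => 1)) (l : Fin (j + 1)) :
    (∀ z₂ : ℂ, 0 < z₂.im →
      IsCuspFormSL2 ((j : ℤ) + k - (l : ℕ)) (fun z₁ => F (diagH z₁ z₂) l)) ∧
    (∀ z₁ : ℂ, 0 < z₁.im →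
      IsCuspFormSL2 (k + (l : ℕ)) (fun z₂ => F (diagH z₁ z₂) l)) ∧
    (∀ z₁ z₂ : ℂ, 0 < z₁.im → 0 < z₂.im →
      F (diagH z₂ z₁) l = (-1 : ℂ) ^ k * F (diagH z₁ z₂) ⟨j - (l : ℕ), by omega⟩) := by
  have hrev : (⟨j - (l : ℕ), by omega⟩ : Fin (j + 1)) = l.rev := by ext; simp [Fin.val_rev]
  simpa only [one_mul, hrev] using restriction_to_diagonal_general hF sl2Prod_mem_Sp4Z
    (fun _ _ => rfl) coordSwap_mem_Sp4Z l
end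
end
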